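/- arXiv:1310.1781 — 4 statements merged into one kernel-verified Lean document; each statement's English description precedes it below -/
import Mathlib

section
/- Let λ ∈ ℝ with λ ≠ 0. Define the matrices U = [[0, λ m1, 1], [λ n1, 0, λ m2], [1, λ n2, 0]] and V = [[−f1 g1, g1/λ, −g1 g2], [f1/λ, −1/λ² + f1 g1 + f2 g2, g2/λ], [−f1 f2, f2/λ, −f2 g2]]. Then the zero-curvature equation ∂ₜU − ∂ₓV + U·V − V·U = 0 holds identically on ℝ² if and only if (u1, u2, v1, v2) satisfies the four-component system: ∂ₜm1 + n2 g1 g2 + m1(f2 g2 + 2 f1 g1) = 0, ∂ₜm2 − n1 g1 g2 − m2(f1 g1 + 2 f2 g2) = 0, ∂ₜn1 − m2 f1 f2 − n1(f2 g2 + 2 f1 g1) = 0, ∂ₜn2 + m1 f1 f2 + n2(f1 g1 + 2 f2 g2) = 0. -/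
/-- Partial derivative with respect to the first (space) variable. -/
noncomputable def pX (f : ℝ × ℝ → ℝ) : ℝ × ℝ → ℝ :=
  fun p => deriv (fun x => f (x, p.2)) p.1

/-- Partial derivative with respect to the second (time) variable. -/
noncomputable def pT (f : ℝ × ℝ → ℝ) : ℝ × ℝ → ℝ :=
  fun p => deriv (fun t => f (p.1, t)) p.2

/-!
The `x`-derivatives of the auxiliary fields close up algebraically:
`∂ₓf1 = n1 - g2`, `∂ₓf2 = g1 - n2`, `∂ₓg1 = f2 - m1`, `∂ₓg2 = m2 - f1`.
The commutator `[U, V]` is exactly the `∂ₓV` that these relations predict, plus `lam` times a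
matrix supported next to the diagonal. Since `∂ₜU` is also `lam` times such a matrix, the
zero-curvature expression is `lam` times the matrix of the four equations.
-/

section LaxPair

variable {K : Type*} [Field K]

/-- The tridiagonal matrix with zero diagonal, superdiagonal `(a1, a2)` and subdiagonal `(b1, b2)`:
the positions of the potentials `m1, m2` and `n1, n2` in `U`. -/
def hollowTridiagonal (a1 a2 b1 b2 : K) : Matrix (Fin 3) (Fin 3) K :=
  !![0, a1, 0; b1, 0, a2; 0, b2, 0]

/-- The spatial Lax matrix `U` with spectral parameter `lam`, as a function of the values of the
potentials. -/
def laxU (lam m1 m2 n1 n2 : K) : Matrix (Fin 3) (Fin 3) K :=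
  !![0, lam * m1, 1;
     lam * n1, 0, lam * m2;
     1, lam * n2, 0]

/-- The temporal Lax matrix `V` with spectral parameter `lam`, as a function of the values of the
auxiliary fields `f1, f2, g1, g2`. -/
def laxV (lam f1 f2 g1 g2 : K) : Matrix (Fin 3) (Fin 3) K :=
  !![-(f1 * g1), g1 / lam, -(g1 * g2);
     f1 / lam, -(1 / lam ^ 2) + f1 * g1 + f2 * g2, g2 / lam;
     -(f1 * f2), f2 / lam, -(f2 * g2)]

/-- The differential of `laxV lam` at `(f1, f2, g1, g2)` in the direction `(df1, df2, dg1, dg2)`,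
used to express `∂ₓV`. -/
def laxVDifferential (lam f1 f2 g1 g2 df1 df2 dg1 dg2 : K) : Matrix (Fin 3) (Fin 3) K :=
  !![-(df1 * g1 + f1 * dg1), dg1 / lam, -(dg1 * g2 + g1 * dg2);
     df1 / lam, (df1 * g1 + f1 * dg1) + (df2 * g2 + f2 * dg2), dg2 / lam;
     -(df1 * f2 + f1 * df2), df2 / lam, -(df2 * g2 + f2 * dg2)]

lemma hollowTridiagonal_eq_zero_iff {a1 a2 b1 b2 : K} :
    hollowTridiagonal a1 a2 b1 b2 = 0 ↔ a1 = 0 ∧ a2 = 0 ∧ b1 = 0 ∧ b2 = 0 := by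
  simp [hollowTridiagonal, ← Matrix.ext_iff, Fin.forall_fin_succ, and_assoc, and_left_comm]

lemma hollowTridiagonal_add (a1 a2 b1 b2 c1 c2 d1 d2 : K) :
    hollowTridiagonal a1 a2 b1 b2 + hollowTridiagonal c1 c2 d1 d2 =
      hollowTridiagonal (a1 + c1) (a2 + c2) (b1 + d1) (b2 + d2) := by
  simp [hollowTridiagonal]

lemma laxU_mul_laxV_sub_laxV_mul_laxU {lam : K} (hlam : lam ≠ 0)
    (m1 m2 n1 n2 f1 f2 g1 g2 : K) :
    laxU lam m1 m2 n1 n2 * laxV lam f1 f2 g1 g2 - laxV lam f1 f2 g1 g2 * laxU lam m1 m2 n1 n2 =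
      laxVDifferential lam f1 f2 g1 g2 (n1 - g2) (g1 - n2) (f2 - m1) (m2 - f1) +
        lam • hollowTridiagonal
          (n2 * g1 * g2 + m1 * (f2 * g2 + 2 * f1 * g1))
          (-(n1 * g1 * g2) - m2 * (f1 * g1 + 2 * f2 * g2))
          (-(m2 * f1 * f2) - n1 * (f2 * g2 + 2 * f1 * g1))
          (m1 * f1 * f2 + n2 * (f1 * g1 + 2 * f2 * g2)) := by
  ext i j
  fin_cases i <;> fin_cases j <;>
    simp [laxU, laxV, laxVDifferential, hollowTridiagonal] <;>
    field_simp <;>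
    ring

end LaxPair

lemma hasDerivAt_laxV_apply {𝕜 : Type*} [NontriviallyNormedField 𝕜] (lam : 𝕜)
    {f1 f2 g1 g2 : 𝕜 → 𝕜} {df1 df2 dg1 dg2 x : 𝕜}
    (hf1 : HasDerivAt f1 df1 x) (hf2 : HasDerivAt f2 df2 x)
    (hg1 : HasDerivAt g1 dg1 x) (hg2 : HasDerivAt g2 dg2 x) (i j : Fin 3) :
    HasDerivAt (fun y => laxV lam (f1 y) (f2 y) (g1 y) (g2 y) i j)
      (laxVDifferential lam (f1 x) (f2 x) (g1 x) (g2 x) df1 df2 dg1 dg2 i j) x := by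
  fin_cases i <;> fin_cases j
  · exact (hf1.mul hg1).neg
  · exact hg1.div_const lam
  · exact (hg1.mul hg2).neg
  · exact hf1.div_const lam
  · exact ((hf1.mul hg1).const_add _).add (hf2.mul hg2)
  · exact hg2.div_const lam
  · exact (hf1.mul hf2).neg
  · exact hf2.div_const lam
  · exact (hf2.mul hg2).neg

lemma pT_laxU_apply (lam : ℝ) (m1 m2 n1 n2 : ℝ × ℝ → ℝ) (p : ℝ × ℝ) (i j : Fin 3) :
    pT (fun q => laxU lam (m1 q) (m2 q) (n1 q) (n2 q) i j) p =
      (lam • hollowTridiagonal (pT m1 p) (pT m2 p) (pT n1 p) (pT n2 p)) i j := by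
  fin_cases i <;> fin_cases j <;> simp [pT, laxU, hollowTridiagonal]

/-- The zero-curvature expression `∂ₜU - ∂ₓV + [U, V]` at `p`, with entrywise derivatives. -/
noncomputable def zeroCurvature {ι : Type*} [Fintype ι] (U V : ℝ × ℝ → Matrix ι ι ℝ)
    (p : ℝ × ℝ) : Matrix ι ι ℝ :=
  Matrix.of fun i j => pT (fun q => U q i j) p - pX (fun q => V q i j) p +
    (U p * V p - V p * U p) i j

theorem zeroCurvature_laxU_laxV {lam : ℝ} (hlam : lam ≠ 0)
    (m1 m2 n1 n2 : ℝ × ℝ → ℝ) {f1 f2 g1 g2 : ℝ × ℝ → ℝ} {p : ℝ × ℝ}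
    (hf1 : HasDerivAt (fun x => f1 (x, p.2)) (n1 p - g2 p) p.1)
    (hf2 : HasDerivAt (fun x => f2 (x, p.2)) (g1 p - n2 p) p.1)
    (hg1 : HasDerivAt (fun x => g1 (x, p.2)) (f2 p - m1 p) p.1)
    (hg2 : HasDerivAt (fun x => g2 (x, p.2)) (m2 p - f1 p) p.1) :
    zeroCurvature (fun q => laxU lam (m1 q) (m2 q) (n1 q) (n2 q))
        (fun q => laxV lam (f1 q) (f2 q) (g1 q) (g2 q)) p =
      lam • hollowTridiagonal
        (pT m1 p + n2 p * g1 p * g2 p + m1 p * (f2 p * g2 p + 2 * f1 p * g1 p))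
        (pT m2 p - n1 p * g1 p * g2 p - m2 p * (f1 p * g1 p + 2 * f2 p * g2 p))
        (pT n1 p - m2 p * f1 p * f2 p - n1 p * (f2 p * g2 p + 2 * f1 p * g1 p))
        (pT n2 p + m1 p * f1 p * f2 p + n2 p * (f1 p * g1 p + 2 * f2 p * g2 p)) := by
  have pX_laxV (i j : Fin 3) :
      pX (fun q => laxV lam (f1 q) (f2 q) (g1 q) (g2 q) i j) p =
        laxVDifferential lam (f1 p) (f2 p) (g1 p) (g2 p)
          (n1 p - g2 p) (g1 p - n2 p) (f2 p - m1 p) (m2 p - f1 p) i j :=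
    (hasDerivAt_laxV_apply lam hf1 hf2 hg1 hg2 i j).deriv
  calc
    _ = lam • hollowTridiagonal (pT m1 p) (pT m2 p) (pT n1 p) (pT n2 p) -
          laxVDifferential lam (f1 p) (f2 p) (g1 p) (g2 p)
            (n1 p - g2 p) (g1 p - n2 p) (f2 p - m1 p) (m2 p - f1 p) +
          (laxU lam (m1 p) (m2 p) (n1 p) (n2 p) * laxV lam (f1 p) (f2 p) (g1 p) (g2 p) -
            laxV lam (f1 p) (f2 p) (g1 p) (g2 p) * laxU lam (m1 p) (m2 p) (n1 p) (n2 p)) := by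
      ext i j
      simp only [zeroCurvature, Matrix.of_apply, pT_laxU_apply, pX_laxV, Matrix.add_apply,
        Matrix.sub_apply]
    _ = _ := by
      rw [laxU_mul_laxV_sub_laxV_mul_laxU hlam, ← add_assoc, sub_add_cancel, ← smul_add,
        hollowTridiagonal_add]
      simp only [add_assoc, sub_eq_add_neg]

section SpatialDerivative

variable {f u v : ℝ × ℝ → ℝ} {n : WithTop ℕ∞}

lemma differentiable_slice (hf : ContDiff ℝ n f) (hn : n ≠ 0) (t : ℝ) :
    Differentiable ℝ fun x => f (x, t) :=
  (hf.differentiable hn).comp (by fun_prop)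

lemma differentiable_pX_slice (hf : ContDiff ℝ n f) (hn : 2 ≤ n) (t : ℝ) :
    Differentiable ℝ fun x => pX f (x, t) :=
  ContDiff.differentiable_deriv_two ((hf.of_le hn).comp (contDiff_prodMk_left t))

lemma hasDerivAt_sub_pX {p : ℝ × ℝ} (hu : DifferentiableAt ℝ (fun x => u (x, p.2)) p.1)
    (hv : DifferentiableAt ℝ (fun x => pX v (x, p.2)) p.1) :
    HasDerivAt (fun x => u (x, p.2) - pX v (x, p.2))
      ((v p - pX (pX v) p) - (v p - pX u p)) p.1 := by
  rw [sub_sub_sub_cancel_left]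
  exact hu.hasDerivAt.sub hv.hasDerivAt

lemma hasDerivAt_add_pX {p : ℝ × ℝ} (hu : DifferentiableAt ℝ (fun x => u (x, p.2)) p.1)
    (hv : DifferentiableAt ℝ (fun x => pX v (x, p.2)) p.1) :
    HasDerivAt (fun x => u (x, p.2) + pX v (x, p.2))
      ((v p + pX u p) - (v p - pX (pX v) p)) p.1 := by
  rw [add_sub_sub_cancel]
  exact hu.hasDerivAt.add hv.hasDerivAt

end SpatialDerivative

theorem stmt_0_general {u1 u2 v1 v2 : ℝ × ℝ → ℝ}
    (hu1 : ContDiff ℝ 3 u1) (hu2 : ContDiff ℝ 3 u2)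
    (hv1 : ContDiff ℝ 3 v1) (hv2 : ContDiff ℝ 3 v2)
    {lam : ℝ} (hlam : lam ≠ 0) {m1 m2 n1 n2 f1 f2 g1 g2 : ℝ × ℝ → ℝ}
    (hm1 : m1 = fun p => u1 p - pX (pX u1) p) (hm2 : m2 = fun p => u2 p - pX (pX u2) p)
    (hn1 : n1 = fun p => v1 p - pX (pX v1) p) (hn2 : n2 = fun p => v2 p - pX (pX v2) p)
    (hf1 : f1 = fun p => u2 p - pX v1 p) (hf2 : f2 = fun p => u1 p + pX v2 p)
    (hg1 : g1 = fun p => v2 p + pX u1 p) (hg2 : g2 = fun p => v1 p - pX u2 p) (p : ℝ × ℝ) :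
    zeroCurvature (fun q => laxU lam (m1 q) (m2 q) (n1 q) (n2 q))
        (fun q => laxV lam (f1 q) (f2 q) (g1 q) (g2 q)) p = 0 ↔
      pT m1 p + n2 p * g1 p * g2 p + m1 p * (f2 p * g2 p + 2 * f1 p * g1 p) = 0 ∧
      pT m2 p - n1 p * g1 p * g2 p - m2 p * (f1 p * g1 p + 2 * f2 p * g2 p) = 0 ∧
      pT n1 p - m2 p * f1 p * f2 p - n1 p * (f2 p * g2 p + 2 * f1 p * g1 p) = 0 ∧
      pT n2 p + m1 p * f1 p * f2 p + n2 p * (f1 p * g1 p + 2 * f2 p * g2 p) = 0 := by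
  have diff_slice {u : ℝ × ℝ → ℝ} (hu : ContDiff ℝ 3 u) :
      DifferentiableAt ℝ (fun x => u (x, p.2)) p.1 :=
    differentiable_slice hu (by norm_num) p.2 p.1
  have diff_pX {u : ℝ × ℝ → ℝ} (hu : ContDiff ℝ 3 u) :
      DifferentiableAt ℝ (fun x => pX u (x, p.2)) p.1 :=
    differentiable_pX_slice hu (by norm_num) p.2 p.1
  have df1 : HasDerivAt (fun x => f1 (x, p.2)) (n1 p - g2 p) p.1 := by
    simpa only [hf1, hn1, hg2] using hasDerivAt_sub_pX (diff_slice hu2) (diff_pX hv1)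
  have df2 : HasDerivAt (fun x => f2 (x, p.2)) (g1 p - n2 p) p.1 := by
    simpa only [hf2, hg1, hn2] using hasDerivAt_add_pX (diff_slice hu1) (diff_pX hv2)
  have dg1 : HasDerivAt (fun x => g1 (x, p.2)) (f2 p - m1 p) p.1 := by
    simpa only [hg1, hf2, hm1] using hasDerivAt_add_pX (diff_slice hv2) (diff_pX hu1)
  have dg2 : HasDerivAt (fun x => g2 (x, p.2)) (m2 p - f1 p) p.1 := by
    simpa only [hg2, hm2, hf1] using hasDerivAt_sub_pX (diff_slice hv1) (diff_pX hu2)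
  rw [zeroCurvature_laxU_laxV hlam m1 m2 n1 n2 df1 df2 dg1 dg2, smul_eq_zero_iff_right hlam,
    hollowTridiagonal_eq_zero_iff]

theorem stmt_0
    (u1 u2 v1 v2 : ℝ × ℝ → ℝ)
    (hu1 : ContDiff ℝ (⊤ : ℕ∞) u1) (hu2 : ContDiff ℝ (⊤ : ℕ∞) u2)
    (hv1 : ContDiff ℝ (⊤ : ℕ∞) v1) (hv2 : ContDiff ℝ (⊤ : ℕ∞) v2)
    (lam : ℝ) (hlam : lam ≠ 0)
    (m1 m2 n1 n2 f1 f2 g1 g2 : ℝ × ℝ → ℝ)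
    (hm1 : m1 = fun p => u1 p - pX (pX u1) p)
    (hm2 : m2 = fun p => u2 p - pX (pX u2) p)
    (hn1 : n1 = fun p => v1 p - pX (pX v1) p)
    (hn2 : n2 = fun p => v2 p - pX (pX v2) p)
    (hf1 : f1 = fun p => u2 p - pX v1 p)
    (hf2 : f2 = fun p => u1 p + pX v2 p)
    (hg1 : g1 = fun p => v2 p + pX u1 p)
    (hg2 : g2 = fun p => v1 p - pX u2 p)
    (U V : ℝ × ℝ → Matrix (Fin 3) (Fin 3) ℝ)
    (hU : U = fun p => !![0, lam * m1 p, 1;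
                          lam * n1 p, 0, lam * m2 p;
                          1, lam * n2 p, 0])
    (hV : V = fun p => !![-(f1 p * g1 p), g1 p / lam, -(g1 p * g2 p);
                          f1 p / lam, -(1 / lam ^ 2) + f1 p * g1 p + f2 p * g2 p, g2 p / lam;
                          -(f1 p * f2 p), f2 p / lam, -(f2 p * g2 p)]) :
    (∀ p : ℝ × ℝ, ∀ i j : Fin 3,
        pT (fun q => U q i j) p - pX (fun q => V q i j) p
          + (U p * V p - V p * U p) i j = 0)
    ↔
    (∀ p : ℝ × ℝ,
        pT m1 p + n2 p * g1 p * g2 p + m1 p * (f2 p * g2 p + 2 * f1 p * g1 p) = 0 ∧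
        pT m2 p - n1 p * g1 p * g2 p - m2 p * (f1 p * g1 p + 2 * f2 p * g2 p) = 0 ∧
        pT n1 p - m2 p * f1 p * f2 p - n1 p * (f2 p * g2 p + 2 * f1 p * g1 p) = 0 ∧
        pT n2 p + m1 p * f1 p * f2 p + n2 p * (f1 p * g1 p + 2 * f2 p * g2 p) = 0) := by
  subst hU hV
  exact forall_congr' fun p => Matrix.ext_iff.trans <| stmt_0_general
    (contDiff_infty.1 hu1 3) (contDiff_infty.1 hu2 3) (contDiff_infty.1 hv1 3)
    (contDiff_infty.1 hv2 3) hlam hm1 hm2 hn1 hn2 hf1 hf2 hg1 hg2 p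
end

section
/- Suppose (u1, u2, v1, v2) satisfies the four-component system: ∂ₜm1 + n2 g1 g2 + m1(f2 g2 + 2 f1 g1) = 0, ∂ₜm2 − n1 g1 g2 − m2(f1 g1 + 2 f2 g2) = 0, ∂ₜn1 − m2 f1 f2 − n1(f2 g2 + 2 f1 g1) = 0, ∂ₜn2 + m1 f1 f2 + n2(f1 g1 + 2 f2 g2) = 0. Then the function m1 n1 + m2 n2 is pointwise independent of t, i.e. ∂ₜ(m1 n1 + m2 n2) = 0 identically on ℝ². -/
/-! By the product rule and the four evolution equations, every term of `∂ₜ(m₁ n₁ + m₂ n₂)` cancels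
against another one: the potentials of `m₁` and `n₁` (and of `m₂` and `n₂`) are opposite, and the
coupling terms `n₁ n₂ g₁ g₂` and `m₁ m₂ f₁ f₂` each occur once with either sign. -/

lemma differentiableAt_slice_snd {𝕜 E F G : Type*} [NontriviallyNormedField 𝕜]
    [NormedAddCommGroup E] [NormedSpace 𝕜 E] [NormedAddCommGroup F] [NormedSpace 𝕜 F]
    [NormedAddCommGroup G] [NormedSpace 𝕜 G] {f : E × F → G} {p : E × F}
    (hf : DifferentiableAt 𝕜 f p) : DifferentiableAt 𝕜 (fun y => f (p.1, y)) p.2 :=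
  hf.comp p.2 ((differentiableAt_const p.1).prodMk differentiableAt_id)

section PartialDerivatives

variable {f g : ℝ × ℝ → ℝ} {p : ℝ × ℝ} {m n : WithTop ℕ∞}

lemma pX_eq_fderiv (hf : DifferentiableAt ℝ f p) : pX f p = fderiv ℝ f p (1, 0) :=
  (hf.hasFDerivAt.comp_hasDerivAt p.1
    ((hasDerivAt_id p.1).prodMk (hasDerivAt_const p.1 p.2))).deriv

lemma contDiff_pX (hf : ContDiff ℝ n f) (hmn : m + 1 ≤ n) : ContDiff ℝ m (pX f) := by
  have hn : n ≠ 0 := fun h => by simp [h] at hmn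
  have hpX : pX f = fun p => fderiv ℝ f p (1, 0) :=
    funext fun p => pX_eq_fderiv (hf.differentiable hn p)
  exact hpX ▸ (hf.fderiv_right hmn).clm_apply contDiff_const

lemma contDiff_sub_pX_pX (hf : ContDiff ℝ n f) (hmn : m + 2 ≤ n) :
    ContDiff ℝ m (fun p => f p - pX (pX f) p) := by
  have hmn' : m + 1 + 1 ≤ n := by rwa [add_assoc, one_add_one_eq_two]
  have hpX : ContDiff ℝ (m + 1) (pX f) := contDiff_pX hf hmn'
  exact (hf.of_le (le_self_add.trans hmn)).sub (contDiff_pX hpX le_rfl)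

lemma differentiableAt_slice_snd_sub_pX_pX (hf : ContDiff ℝ 3 f) :
    DifferentiableAt ℝ (fun t => f (p.1, t) - pX (pX f) (p.1, t)) p.2 :=
  have hhelmholtz : ContDiff ℝ 1 (fun p => f p - pX (pX f) p) :=
    contDiff_sub_pX_pX hf (by norm_num)
  differentiableAt_slice_snd (hhelmholtz.differentiable one_ne_zero p)

lemma pT_add (hf : DifferentiableAt ℝ (fun t => f (p.1, t)) p.2)
    (hg : DifferentiableAt ℝ (fun t => g (p.1, t)) p.2) :
    pT (fun q => f q + g q) p = pT f p + pT g p :=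
  deriv_fun_add hf hg

lemma pT_mul (hf : DifferentiableAt ℝ (fun t => f (p.1, t)) p.2)
    (hg : DifferentiableAt ℝ (fun t => g (p.1, t)) p.2) :
    pT (fun q => f q * g q) p = pT f p * g p + f p * pT g p :=
  deriv_fun_mul hf hg

end PartialDerivatives

theorem stmt_3_general {m1 m2 n1 n2 f1 f2 g1 g2 : ℝ × ℝ → ℝ} {p : ℝ × ℝ}
    (hm1 : DifferentiableAt ℝ (fun t => m1 (p.1, t)) p.2)
    (hm2 : DifferentiableAt ℝ (fun t => m2 (p.1, t)) p.2)
    (hn1 : DifferentiableAt ℝ (fun t => n1 (p.1, t)) p.2)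
    (hn2 : DifferentiableAt ℝ (fun t => n2 (p.1, t)) p.2)
    (hsys :
        pT m1 p + n2 p * g1 p * g2 p + m1 p * (f2 p * g2 p + 2 * f1 p * g1 p) = 0 ∧
        pT m2 p - n1 p * g1 p * g2 p - m2 p * (f1 p * g1 p + 2 * f2 p * g2 p) = 0 ∧
        pT n1 p - m2 p * f1 p * f2 p - n1 p * (f2 p * g2 p + 2 * f1 p * g1 p) = 0 ∧
        pT n2 p + m1 p * f1 p * f2 p + n2 p * (f1 p * g1 p + 2 * f2 p * g2 p) = 0) :
    pT (fun q => m1 q * n1 q + m2 q * n2 q) p = 0 := by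
  obtain ⟨eq_m1, eq_m2, eq_n1, eq_n2⟩ := hsys
  calc pT (fun q => m1 q * n1 q + m2 q * n2 q) p
      = pT m1 p * n1 p + m1 p * pT n1 p + (pT m2 p * n2 p + m2 p * pT n2 p) := by
        rw [pT_add (hm1.fun_mul hn1) (hm2.fun_mul hn2), pT_mul hm1 hn1, pT_mul hm2 hn2]
    _ = 0 := by
        linear_combination n1 p * eq_m1 + n2 p * eq_m2 + m1 p * eq_n1 + m2 p * eq_n2

theorem stmt_3
    (u1 u2 v1 v2 : ℝ × ℝ → ℝ)
    (hu1 : ContDiff ℝ (⊤ : ℕ∞) u1) (hu2 : ContDiff ℝ (⊤ : ℕ∞) u2)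
    (hv1 : ContDiff ℝ (⊤ : ℕ∞) v1) (hv2 : ContDiff ℝ (⊤ : ℕ∞) v2)
    (m1 m2 n1 n2 f1 f2 g1 g2 : ℝ × ℝ → ℝ)
    (hm1 : m1 = fun p => u1 p - pX (pX u1) p)
    (hm2 : m2 = fun p => u2 p - pX (pX u2) p)
    (hn1 : n1 = fun p => v1 p - pX (pX v1) p)
    (hn2 : n2 = fun p => v2 p - pX (pX v2) p)
    (hf1 : f1 = fun p => u2 p - pX v1 p)
    (hf2 : f2 = fun p => u1 p + pX v2 p)
    (hg1 : g1 = fun p => v2 p + pX u1 p)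
    (hg2 : g2 = fun p => v1 p - pX u2 p)
    (hsys : ∀ p : ℝ × ℝ,
        pT m1 p + n2 p * g1 p * g2 p + m1 p * (f2 p * g2 p + 2 * f1 p * g1 p) = 0 ∧
        pT m2 p - n1 p * g1 p * g2 p - m2 p * (f1 p * g1 p + 2 * f2 p * g2 p) = 0 ∧
        pT n1 p - m2 p * f1 p * f2 p - n1 p * (f2 p * g2 p + 2 * f1 p * g1 p) = 0 ∧
        pT n2 p + m1 p * f1 p * f2 p + n2 p * (f1 p * g1 p + 2 * f2 p * g2 p) = 0) :
    ∀ p : ℝ × ℝ, pT (fun q => m1 q * n1 q + m2 q * n2 q) p = 0 := by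
  subst hm1 hm2 hn1 hn2
  exact fun p => stmt_3_general (differentiableAt_slice_snd_sub_pX_pX (contDiff_infty.1 hu1 3))
    (differentiableAt_slice_snd_sub_pX_pX (contDiff_infty.1 hu2 3))
    (differentiableAt_slice_snd_sub_pX_pX (contDiff_infty.1 hv1 3))
    (differentiableAt_slice_snd_sub_pX_pX (contDiff_infty.1 hv2 3)) (hsys p)
end

section
/- Let λ ∈ ℝ, let Γ : ℝ² → ℝ be smooth, and let Φ = (φ1, φ2, φ3) : ℝ² → ℝ³ be smooth with φ2 nowhere vanishing, satisfying ∂ₓφ1 = λ m1 φ2 + φ3, ∂ₓφ2 = λ n1 φ1 + λ m2 φ3, ∂ₓφ3 = φ1 + λ n2 φ2, together with ∂ₜΦ = Ṽ Φ where Ṽ = −λ Γ · [[0, m1, 0], [n1, 0, m2], [0, n2, 0]]. Set a = φ1/φ2, b = φ3/φ2 and ρ = λ n1 a + λ m2 b. Then ρ satisfies the local conservation law ∂ₜρ + ∂ₓ(Γ ρ) = 0 identically on ℝ². -/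
/-!
The second components of the two linear systems say that `∂ₓφ2 = ρ φ2` and `∂ₜφ2 = -Γ ∂ₓφ2`, so
that `ρ = ∂ₓ log |φ2|` and `Γ ρ = -∂ₜ log |φ2|`. The conservation law is the equality of the mixed
partial derivatives of `log |φ2|`.
-/

section

open scoped Topology

lemma lineDeriv_fun_neg {𝕜 E F : Type*} [NontriviallyNormedField 𝕜] [AddCommGroup E] [Module 𝕜 E]
    [NormedAddCommGroup F] [NormedSpace 𝕜 F] (f : E → F) (p v : E) :
    lineDeriv 𝕜 (fun q => -f q) p v = -lineDeriv 𝕜 f p v :=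
  deriv.fun_neg

lemma lineDeriv_log {E : Type*} [AddCommGroup E] [Module ℝ E] {f : E → ℝ} {p v : E}
    (hf : LineDifferentiableAt ℝ f p v) (hp : f p ≠ 0) :
    lineDeriv ℝ (fun q => Real.log (f q)) p v = lineDeriv ℝ f p v / f p := by
  simpa [lineDeriv] using deriv.log hf (by simpa using hp)

lemma lineDeriv_lineDeriv_eq_fderiv_fderiv {𝕜 E F : Type*} [NontriviallyNormedField 𝕜]
    [NormedAddCommGroup E] [NormedSpace 𝕜 E] [NormedAddCommGroup F] [NormedSpace 𝕜 F]
    {f : E → F} {p : E} (hf : ContDiffAt 𝕜 2 f p) (v w : E) :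
    lineDeriv 𝕜 (fun q => lineDeriv 𝕜 f q v) p w = fderiv 𝕜 (fderiv 𝕜 f) p w v := by
  have first_deriv : (fun q => lineDeriv 𝕜 f q v) =ᶠ[𝓝 p] fun q => fderiv 𝕜 f q v :=
    (hf.eventually (by simp)).mono fun q hq => (hq.differentiableAt two_ne_zero).lineDeriv_eq_fderiv
  have fderiv_diff : DifferentiableAt 𝕜 (fderiv 𝕜 f) p :=
    (hf.fderiv_right (m := 1) (by norm_num)).differentiableAt one_ne_zero
  have apply_deriv := fderiv_diff.hasFDerivAt.clm_apply (hasFDerivAt_const v p)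
  rw [first_deriv.lineDeriv_eq, (apply_deriv.hasLineDerivAt w).lineDeriv]
  simp

lemma lineDeriv_comm {𝕜 E F : Type*} [RCLike 𝕜] [NormedAddCommGroup E] [NormedSpace 𝕜 E]
    [NormedAddCommGroup F] [NormedSpace 𝕜 F] {f : E → F} {p : E} (hf : ContDiffAt 𝕜 2 f p)
    (v w : E) :
    lineDeriv 𝕜 (fun q => lineDeriv 𝕜 f q v) p w =
      lineDeriv 𝕜 (fun q => lineDeriv 𝕜 f q w) p v := by
  rw [lineDeriv_lineDeriv_eq_fderiv_fderiv hf, lineDeriv_lineDeriv_eq_fderiv_fderiv hf]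
  exact (hf.isSymmSndFDerivAt (by simp)).eq w v

theorem conservation_law_of_transport {E : Type*} [NormedAddCommGroup E] [NormedSpace ℝ E]
    {φ c : E → ℝ} {p v w : E} (hφ : ContDiffAt ℝ 2 φ p) (hp : φ p ≠ 0)
    (transport : ∀ᶠ q in 𝓝 p, lineDeriv ℝ φ q w = -(c q * lineDeriv ℝ φ q v)) :
    lineDeriv ℝ (fun q => lineDeriv ℝ φ q v / φ q) p w +
      lineDeriv ℝ (fun q => c q * (lineDeriv ℝ φ q v / φ q)) p v = 0 := by
  have log_deriv : ∀ᶠ q in 𝓝 p, ∀ u,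
      lineDeriv ℝ (fun r => Real.log (φ r)) q u = lineDeriv ℝ φ q u / φ q := by
    filter_upwards [hφ.eventually (by simp), hφ.continuousAt.eventually_ne hp] with q hφq hq u
    exact lineDeriv_log (hφq.differentiableAt two_ne_zero).lineDifferentiableAt hq
  have density : (fun q => lineDeriv ℝ φ q v / φ q) =ᶠ[𝓝 p]
      fun q => lineDeriv ℝ (fun r => Real.log (φ r)) q v :=
    log_deriv.mono fun q hq => (hq v).symm
  have flux : (fun q => c q * (lineDeriv ℝ φ q v / φ q)) =ᶠ[𝓝 p]
      fun q => -lineDeriv ℝ (fun r => Real.log (φ r)) q w := by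
    filter_upwards [log_deriv, transport] with q hlog hq
    rw [hlog, hq]
    ring
  rw [density.lineDeriv_eq, flux.lineDeriv_eq, lineDeriv_fun_neg, lineDeriv_comm (hφ.log hp),
    add_neg_cancel]

lemma pX_eq_lineDeriv (f : ℝ × ℝ → ℝ) (p : ℝ × ℝ) : pX f p = lineDeriv ℝ f p (1, 0) := by
  obtain ⟨x, t⟩ := p
  simpa [pX, lineDeriv] using (deriv_comp_const_add (fun y => f (y, t)) x 0).symm

lemma pT_eq_lineDeriv (f : ℝ × ℝ → ℝ) (p : ℝ × ℝ) : pT f p = lineDeriv ℝ f p (0, 1) := by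
  obtain ⟨x, t⟩ := p
  simpa [pT, lineDeriv] using (deriv_comp_const_add (fun s => f (x, s)) t 0).symm

theorem stmt_12_general {m2 n1 Γ φ1 φ2 φ3 : ℝ × ℝ → ℝ} {lam : ℝ} {p : ℝ × ℝ}
    (hφ2 : ContDiffAt ℝ 2 φ2 p) (hp : φ2 p ≠ 0)
    (hx2 : ∀ᶠ q in 𝓝 p, pX φ2 q = lam * n1 q * φ1 q + lam * m2 q * φ3 q)
    (ht2 : ∀ᶠ q in 𝓝 p, pT φ2 q = -lam * Γ q * (n1 q * φ1 q + m2 q * φ3 q)) :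
    pT (fun q => lam * n1 q * (φ1 q / φ2 q) + lam * m2 q * (φ3 q / φ2 q)) p +
      pX (fun q => Γ q * (lam * n1 q * (φ1 q / φ2 q) + lam * m2 q * (φ3 q / φ2 q))) p = 0 := by
  have transport : ∀ᶠ q in 𝓝 p, pT φ2 q = -(Γ q * pX φ2 q) := by
    filter_upwards [hx2, ht2] with q hxq htq
    rw [hxq, htq]
    ring
  have density : (fun q => lam * n1 q * (φ1 q / φ2 q) + lam * m2 q * (φ3 q / φ2 q)) =ᶠ[𝓝 p]
      fun q => pX φ2 q / φ2 q := by
    filter_upwards [hx2] with q hxq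
    rw [hxq]
    ring
  have flux : (fun q => Γ q * (lam * n1 q * (φ1 q / φ2 q) + lam * m2 q * (φ3 q / φ2 q))) =ᶠ[𝓝 p]
      fun q => Γ q * (pX φ2 q / φ2 q) :=
    density.mono fun q hq => congrArg (Γ q * ·) hq
  simp only [pX_eq_lineDeriv, pT_eq_lineDeriv] at transport density flux ⊢
  rw [density.lineDeriv_eq, flux.lineDeriv_eq]
  exact conservation_law_of_transport hφ2 hp transport

end

theorem stmt_12
    (m1 m2 n1 n2 Γ : ℝ × ℝ → ℝ)
    (hm1 : ContDiff ℝ (⊤ : ℕ∞) m1) (hm2 : ContDiff ℝ (⊤ : ℕ∞) m2)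
    (hn1 : ContDiff ℝ (⊤ : ℕ∞) n1) (hn2 : ContDiff ℝ (⊤ : ℕ∞) n2)
    (hΓ : ContDiff ℝ (⊤ : ℕ∞) Γ)
    (lam : ℝ)
    (W : ℝ × ℝ → Matrix (Fin 3) (Fin 3) ℝ)
    (hW : W = fun p => (-lam * Γ p) • !![0, m1 p, 0;
                                         n1 p, 0, m2 p;
                                         0, n2 p, 0])
    (φ1 φ2 φ3 : ℝ × ℝ → ℝ)
    (hφ1 : ContDiff ℝ (⊤ : ℕ∞) φ1) (hφ2 : ContDiff ℝ (⊤ : ℕ∞) φ2) (hφ3 : ContDiff ℝ (⊤ : ℕ∞) φ3)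
    (hφ2ne : ∀ p : ℝ × ℝ, φ2 p ≠ 0)
    (hx1 : ∀ p : ℝ × ℝ, pX φ1 p = lam * m1 p * φ2 p + φ3 p)
    (hx2 : ∀ p : ℝ × ℝ, pX φ2 p = lam * n1 p * φ1 p + lam * m2 p * φ3 p)
    (hx3 : ∀ p : ℝ × ℝ, pX φ3 p = φ1 p + lam * n2 p * φ2 p)
    (ht1 : ∀ p : ℝ × ℝ, pT φ1 p = W p 0 0 * φ1 p + W p 0 1 * φ2 p + W p 0 2 * φ3 p)
    (ht2 : ∀ p : ℝ × ℝ, pT φ2 p = W p 1 0 * φ1 p + W p 1 1 * φ2 p + W p 1 2 * φ3 p)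
    (ht3 : ∀ p : ℝ × ℝ, pT φ3 p = W p 2 0 * φ1 p + W p 2 1 * φ2 p + W p 2 2 * φ3 p)
    (a b ρ : ℝ × ℝ → ℝ)
    (ha : a = fun p => φ1 p / φ2 p)
    (hb : b = fun p => φ3 p / φ2 p)
    (hρ : ρ = fun p => lam * n1 p * a p + lam * m2 p * b p) :
    ∀ p : ℝ × ℝ, pT ρ p + pX (fun q => Γ q * ρ q) p = 0 := by
  subst hW ha hb hρ
  exact fun p => stmt_12_general (contDiff_infty.1 hφ2 2).contDiffAt (hφ2ne p)
    (.of_forall hx2) (.of_forall fun q => by simp [ht2, mul_add, mul_assoc])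
end

section
/- Let L > 0 and suppose (u1, u2, v1, v2) are smooth, L-periodic in x, and satisfy the four-component system: ∂ₜm1 + n2 g1 g2 + m1(f2 g2 + 2 f1 g1) = 0, ∂ₜm2 − n1 g1 g2 − m2(f1 g1 + 2 f2 g2) = 0, ∂ₜn1 − m2 f1 f2 − n1(f2 g2 + 2 f1 g1) = 0, ∂ₜn2 + m1 f1 f2 + n2(f1 g1 + 2 f2 g2) = 0. Then the quantity H₀(t) = ∫₀ᴸ (f1 g1 + f2 g2)(m2 f2 + n1 g1)(x, t) dx is independent of t. -/
/-!
Put `p = (f1, g2)`, `q = (g1, f2)`, `M = (n1, m2)`, `N = -(m1, n2)`, and let `K` be minus the matrix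
swapping the two coordinates. The definitions of `f1, f2, g1, g2` say that `p` and `q` solve forced
linear equations adjoint to each other, `∂ₓ p = K p + M` and `∂ₓ q = -Kᵀ q + N`, and the system
reads `∂ₜ M = (M · q) p + (p · q) M`, `∂ₜ N = -((p · N) q + (p · q) N)`. For adjoint equations `K`
cancels from the derivative of the pairing, so `∂ₓ (p · q) = M · q + p · N`. Since `K` is constant,
`∂ₜ p` and `∂ₜ q` again solve adjoint equations, with forcing `∂ₜ M` and `∂ₜ N`. This computes
`∂ₓ (∂ₜ p · q)` and `∂ₓ (∂ₜ p · ∂ₜ q)` although the system gives `∂ₜ p` and `∂ₜ q` only nonlocally,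
and leads to `∂ₜ ((p · q) (M · q)) = ∂ₓ (∂ₜ p · ∂ₜ q + (p · q) (∂ₜ p · q))`. The flux on the right
is periodic.
-/

open Matrix
open scoped ContDiff

lemma comp_vec2 {α β : Type*} (f : α → β) (a b : α) : f ∘ ![a, b] = ![f a, f b] :=
  (FinVec.map_eq f ![a, b]).symm

section Derivation

variable {R A ι : Type*} [CommSemiring R] [CommRing A] [Algebra R A] [Fintype ι]

lemma derivation_dotProduct (D : Derivation R A A) (a b : ι → A) :
    D (a ⬝ᵥ b) = (D ∘ a) ⬝ᵥ b + a ⬝ᵥ (D ∘ b) := by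
  simp only [dotProduct, map_sum, Derivation.leibniz, smul_eq_mul, Function.comp_apply,
    ← Finset.sum_add_distrib]
  exact Finset.sum_congr rfl fun i _ => by ring

lemma derivation_comp_mulVec (D : Derivation R A A) (K : Matrix ι ι A) (a : ι → A) :
    D ∘ (K *ᵥ a) = K.map D *ᵥ a + K *ᵥ (D ∘ a) :=
  funext fun i => derivation_dotProduct D (K i) a

lemma derivation_dotProduct_of_adjoint {D : Derivation R A A} {K : Matrix ι ι A}
    {a b α β : ι → A} (ha : D ∘ a = K *ᵥ a + α) (hb : D ∘ b = -Kᵀ *ᵥ b + β) :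
    D (a ⬝ᵥ b) = α ⬝ᵥ b + a ⬝ᵥ β := by
  have adjoint : a ⬝ᵥ -Kᵀ *ᵥ b = -(K *ᵥ a ⬝ᵥ b) := by
    rw [neg_mulVec, dotProduct_neg, dotProduct_mulVec, vecMul_transpose]
  rw [derivation_dotProduct, ha, hb, add_dotProduct, dotProduct_add, adjoint]
  ring

lemma derivation_comp_derivation_of_linear {D₁ D₂ : Derivation R A A}
    (comm : Function.Commute D₁ D₂) {K : Matrix ι ι A} (hK : K.map D₂ = 0) {a α : ι → A}
    (ha : D₁ ∘ a = K *ᵥ a + α) :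
    D₁ ∘ (D₂ ∘ a) = K *ᵥ (D₂ ∘ a) + D₂ ∘ α :=
  calc D₁ ∘ (D₂ ∘ a) = D₂ ∘ (D₁ ∘ a) := funext fun i => comm (a i)
    _ = D₂ ∘ (K *ᵥ a) + D₂ ∘ α := by rw [ha]; exact funext fun i => map_add D₂ _ _
    _ = K *ᵥ (D₂ ∘ a) + D₂ ∘ α := by rw [derivation_comp_mulVec, hK, zero_mulVec, zero_add]

/-- A pair of vectors `p`, `q` over a ring with derivations `Dx` and `Dt` (playing the roles of `∂ₓ`
and `∂ₜ`) which solve adjoint linear equations in `x`, with forcing terms `M` and `N` evolving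
quadratically along `p` and `q`. -/
structure IsAdjointPairFlow (Dx Dt : Derivation R A A) (K : Matrix ι ι A) (p q M N : ι → A) :
    Prop where
  dt_K : K.map Dt = 0
  dx_p : Dx ∘ p = K *ᵥ p + M
  dx_q : Dx ∘ q = -Kᵀ *ᵥ q + N
  dt_M : Dt ∘ M = (M ⬝ᵥ q) • p + (p ⬝ᵥ q) • M
  dt_N : Dt ∘ N = -((p ⬝ᵥ N) • q + (p ⬝ᵥ q) • N)

namespace IsAdjointPairFlow

variable {Dx Dt : Derivation R A A} {K : Matrix ι ι A} {p q M N : ι → A}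

lemma dx_dotProduct (h : IsAdjointPairFlow Dx Dt K p q M N) :
    Dx (p ⬝ᵥ q) = M ⬝ᵥ q + p ⬝ᵥ N :=
  derivation_dotProduct_of_adjoint h.dx_p h.dx_q

lemma dt_forcing_dotProduct (h : IsAdjointPairFlow Dx Dt K p q M N) :
    Dt (M ⬝ᵥ q) = 2 * (p ⬝ᵥ q) * (M ⬝ᵥ q) + M ⬝ᵥ (Dt ∘ q) := by
  rw [derivation_dotProduct, h.dt_M]
  simp only [add_dotProduct, smul_dotProduct, smul_eq_mul]
  ring

lemma dx_dt_p (h : IsAdjointPairFlow Dx Dt K p q M N) (comm : Function.Commute Dx Dt) :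
    Dx ∘ (Dt ∘ p) = K *ᵥ (Dt ∘ p) + Dt ∘ M :=
  derivation_comp_derivation_of_linear comm h.dt_K h.dx_p

lemma dx_dt_q (h : IsAdjointPairFlow Dx Dt K p q M N) (comm : Function.Commute Dx Dt) :
    Dx ∘ (Dt ∘ q) = -Kᵀ *ᵥ (Dt ∘ q) + Dt ∘ N := by
  have dt_adjoint : (-Kᵀ).map Dt = 0 := by
    rw [Matrix.map_neg Dt (map_neg Dt), transpose_map, h.dt_K, transpose_zero, neg_zero]
  exact derivation_comp_derivation_of_linear comm dt_adjoint h.dx_q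

lemma dx_dt_p_dotProduct_q (h : IsAdjointPairFlow Dx Dt K p q M N)
    (comm : Function.Commute Dx Dt) :
    Dx ((Dt ∘ p) ⬝ᵥ q) = 2 * (p ⬝ᵥ q) * (M ⬝ᵥ q) + (Dt ∘ p) ⬝ᵥ N := by
  rw [derivation_dotProduct_of_adjoint (h.dx_dt_p comm) h.dx_q, h.dt_M]
  simp only [add_dotProduct, smul_dotProduct, smul_eq_mul]
  ring

lemma dx_dt_p_dotProduct_dt_q (h : IsAdjointPairFlow Dx Dt K p q M N)
    (comm : Function.Commute Dx Dt) :
    Dx ((Dt ∘ p) ⬝ᵥ (Dt ∘ q)) =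
      (M ⬝ᵥ q) * (p ⬝ᵥ (Dt ∘ q)) - (p ⬝ᵥ N) * ((Dt ∘ p) ⬝ᵥ q)
        + (p ⬝ᵥ q) * (M ⬝ᵥ (Dt ∘ q) - (Dt ∘ p) ⬝ᵥ N) := by
  rw [derivation_dotProduct_of_adjoint (h.dx_dt_p comm) (h.dx_dt_q comm), h.dt_M, h.dt_N]
  simp only [add_dotProduct, smul_dotProduct, dotProduct_neg, dotProduct_add, dotProduct_smul,
    smul_eq_mul]
  ring

theorem conservation_law (h : IsAdjointPairFlow Dx Dt K p q M N)
    (comm : Function.Commute Dx Dt) :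
    Dt ((p ⬝ᵥ q) * (M ⬝ᵥ q)) =
      Dx ((Dt ∘ p) ⬝ᵥ (Dt ∘ q) + (p ⬝ᵥ q) * ((Dt ∘ p) ⬝ᵥ q)) := by
  rw [map_add, Derivation.leibniz, Derivation.leibniz, h.dx_dt_p_dotProduct_dt_q comm,
    h.dx_dt_p_dotProduct_q comm, h.dx_dotProduct, h.dt_forcing_dotProduct,
    derivation_dotProduct]
  simp only [smul_eq_mul]
  ring

lemma of_fourComponentSystem {u1 u2 v1 v2 m1 m2 n1 n2 f1 f2 g1 g2 : A}
    (hm1 : m1 = u1 - Dx (Dx u1)) (hm2 : m2 = u2 - Dx (Dx u2))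
    (hn1 : n1 = v1 - Dx (Dx v1)) (hn2 : n2 = v2 - Dx (Dx v2))
    (hf1 : f1 = u2 - Dx v1) (hf2 : f2 = u1 + Dx v2)
    (hg1 : g1 = v2 + Dx u1) (hg2 : g2 = v1 - Dx u2)
    (dt_m1 : Dt m1 + n2 * g1 * g2 + m1 * (f2 * g2 + 2 * f1 * g1) = 0)
    (dt_m2 : Dt m2 - n1 * g1 * g2 - m2 * (f1 * g1 + 2 * f2 * g2) = 0)
    (dt_n1 : Dt n1 - m2 * f1 * f2 - n1 * (f2 * g2 + 2 * f1 * g1) = 0)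
    (dt_n2 : Dt n2 + m1 * f1 * f2 + n2 * (f1 * g1 + 2 * f2 * g2) = 0) :
    IsAdjointPairFlow Dx Dt !![0, -1; -1, 0] ![f1, g2] ![g1, f2] ![n1, m2] ![-m1, -n2] where
  dt_K := by ext i j; fin_cases i <;> fin_cases j <;> simp
  dx_p := by ext i; fin_cases i <;> simp [hf1, hg2, hn1, hm2]
  dx_q := by ext i; fin_cases i <;> simp [hf2, hg1, hn2, hm1] <;> ring
  dt_M := by
    simp only [comp_vec2, vec2_dotProduct', smul_vec2, vec2_add, smul_eq_mul]
    exact vec2_eq (by linear_combination dt_n1) (by linear_combination dt_m2)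
  dt_N := by
    simp only [comp_vec2, vec2_dotProduct', smul_vec2, vec2_add, neg_cons, neg_empty, smul_eq_mul,
      map_neg]
    exact vec2_eq (by linear_combination -dt_m1) (by linear_combination -dt_n2)

lemma conservation_law_fin_two {K : Matrix (Fin 2) (Fin 2) A} {N : Fin 2 → A}
    {m2 n1 f1 f2 g1 g2 : A}
    (h : IsAdjointPairFlow Dx Dt K ![f1, g2] ![g1, f2] ![n1, m2] N)
    (comm : Function.Commute Dx Dt) :
    Dt ((f1 * g1 + f2 * g2) * (m2 * f2 + n1 * g1)) =
      Dx (Dt f1 * Dt g1 + Dt f2 * Dt g2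
        + (f1 * g1 + f2 * g2) * (Dt f1 * g1 + f2 * Dt g2)) := by
  have law := h.conservation_law comm
  simp only [comp_vec2, vec2_dotProduct'] at law
  convert law using 2 <;> ring

end IsAdjointPairFlow

end Derivation

section SmoothPeriodic

variable {E : Type*} [NormedAddCommGroup E] [NormedSpace ℝ E] {c : E}

/-- The algebra of smooth real functions on `E` that are invariant under translation by `c`. It is
stable under directional derivatives, so fluxes built inside it are automatically periodic. -/
def smoothPeriodic (c : E) : Subalgebra ℝ (E → ℝ) where
  carrier := {f | ContDiff ℝ ∞ f ∧ Function.Periodic f c}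
  mul_mem' hf hg := ⟨hf.1.mul hg.1, hf.2.mul hg.2⟩
  add_mem' hf hg := ⟨hf.1.add hg.1, hf.2.add hg.2⟩
  algebraMap_mem' _ := ⟨contDiff_const, fun _ => rfl⟩

lemma smoothPeriodic.differentiable (f : smoothPeriodic c) : Differentiable ℝ (f : E → ℝ) :=
  f.2.1.differentiable (by simp)

lemma fderiv_apply_mem_smoothPeriodic {f : E → ℝ} (hf : f ∈ smoothPeriodic c) (v : E) :
    (fun x => fderiv ℝ f x v) ∈ smoothPeriodic c := by
  refine ⟨(hf.1.fderiv_right (by simp)).clm_apply contDiff_const, fun x => ?_⟩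
  have shift := fderiv_comp_add_right (𝕜 := ℝ) (f := f) (x := x) c
  rw [funext hf.2] at shift
  simp only [shift]

/-- The directional derivative along `v`, as a derivation of the algebra of smooth periodic
functions. -/
noncomputable def dirDeriv (c v : E) : Derivation ℝ (smoothPeriodic c) (smoothPeriodic c) :=
  Derivation.mk'
    { toFun := fun f => ⟨fun x => fderiv ℝ f x v, fderiv_apply_mem_smoothPeriodic f.2 v⟩
      map_add' := fun f g => by
        ext x
        simp [fderiv_add (smoothPeriodic.differentiable f x) (smoothPeriodic.differentiable g x)]
      map_smul' := fun r f => by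
        ext x
        simp [fderiv_const_smul (smoothPeriodic.differentiable f x)] }
    fun f g => by
      ext x
      simp [fderiv_mul (smoothPeriodic.differentiable f x) (smoothPeriodic.differentiable g x)]

lemma coe_dirDeriv (v : E) (f : smoothPeriodic c) :
    (dirDeriv c v f : E → ℝ) = fun x => fderiv ℝ f x v :=
  rfl

lemma dirDeriv_dirDeriv_apply (v w : E) (f : smoothPeriodic c) (x : E) :
    (dirDeriv c v (dirDeriv c w f) : E → ℝ) x = fderiv ℝ (fderiv ℝ f) x v w := by
  have hf : DifferentiableAt ℝ (fderiv ℝ (f : E → ℝ)) x :=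
    (f.2.1.fderiv_right (m := ∞) (by simp)).differentiable (by simp) x
  simp [coe_dirDeriv, fderiv_clm_apply hf (differentiableAt_const w)]

lemma dirDeriv_commute (c v w : E) : Function.Commute (dirDeriv c v) (dirDeriv c w) := by
  intro f
  ext x
  have smoothness : minSmoothness ℝ 2 ≤ ∞ := by
    rw [minSmoothness_of_isRCLikeNormedField]
    exact WithTop.coe_le_coe.2 (le_top : (2 : ℕ∞) ≤ ⊤)
  rw [dirDeriv_dirDeriv_apply, dirDeriv_dirDeriv_apply]
  exact f.2.1.contDiffAt.isSymmSndFDerivAt smoothness v w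

end SmoothPeriodic

section PlaneFunctions

lemma pX_eq_fderiv_s16 {f : ℝ × ℝ → ℝ} (hf : Differentiable ℝ f) :
    pX f = fun z => fderiv ℝ f z (1, 0) :=
  funext fun z => ((hf z).hasFDerivAt.comp_hasDerivAt z.1
    ((hasDerivAt_id z.1).prodMk (hasDerivAt_const z.1 z.2))).deriv

lemma pT_eq_fderiv {f : ℝ × ℝ → ℝ} (hf : Differentiable ℝ f) :
    pT f = fun z => fderiv ℝ f z (0, 1) :=
  funext fun z => ((hf z).hasFDerivAt.comp_hasDerivAt z.2
    ((hasDerivAt_const z.2 z.1).prodMk (hasDerivAt_id z.2))).deriv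

lemma pX_coe {c : ℝ × ℝ} (f : smoothPeriodic c) : pX f = dirDeriv c (1, 0) f :=
  pX_eq_fderiv_s16 (smoothPeriodic.differentiable f)

lemma pT_coe {c : ℝ × ℝ} (f : smoothPeriodic c) : pT f = dirDeriv c (0, 1) f :=
  pT_eq_fderiv (smoothPeriodic.differentiable f)

lemma exists_smoothPeriodic_coe_eq {L : ℝ} {f : ℝ × ℝ → ℝ} (hf : ContDiff ℝ ∞ f)
    (hper : ∀ x t : ℝ, f (x + L, t) = f (x, t)) : ∃ F : smoothPeriodic (L, (0 : ℝ)), F = f :=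
  ⟨⟨f, hf, fun ⟨x, t⟩ => by simpa using hper x t⟩, rfl⟩

lemma intervalIntegral_eq_of_conservation_law {E : Type*} [NormedAddCommGroup E] [NormedSpace ℝ E]
    {Φ J : ℝ × ℝ → E} (hΦ : Differentiable ℝ Φ) (hJ : Differentiable ℝ J)
    (law : ∀ z, fderiv ℝ Φ z (0, 1) = fderiv ℝ J z (1, 0)) {a b : ℝ}
    (boundary : ∀ t, J (b, t) = J (a, t)) (t₁ t₂ : ℝ) :
    ∫ x in a..b, Φ (x, t₁) = ∫ x in a..b, Φ (x, t₂) := by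
  have divergence (z : ℝ × ℝ) : (-fderiv ℝ J z) (1, 0) + fderiv ℝ Φ z (0, 1) = 0 := by simp [law]
  have green := MeasureTheory.integral2_divergence_prod_of_hasFDerivAt_off_countable
    (-J) Φ (fun z => -fderiv ℝ J z) (fderiv ℝ Φ) a t₂ b t₁ ∅ Set.countable_empty
    hJ.neg.continuous.continuousOn hΦ.continuous.continuousOn
    (fun z _ => (hJ z).hasFDerivAt.neg) (fun z _ => (hΦ z).hasFDerivAt)
    (by simpa only [divergence] using MeasureTheory.integrableOn_zero)
  simp only [divergence, intervalIntegral.integral_zero, Pi.neg_apply, boundary,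
    add_sub_cancel_right] at green
  exact sub_eq_zero.mp green.symm

lemma smoothPeriodic.integral_eq_of_dirDeriv_eq {L : ℝ}
    {Φ J : smoothPeriodic (L, (0 : ℝ))}
    (law : dirDeriv (L, 0) (0, 1) Φ = dirDeriv (L, 0) (1, 0) J) (t₁ t₂ : ℝ) :
    ∫ x in (0 : ℝ)..L, (Φ : ℝ × ℝ → ℝ) (x, t₁) = ∫ x in (0 : ℝ)..L, (Φ : ℝ × ℝ → ℝ) (x, t₂) :=
  intervalIntegral_eq_of_conservation_law (smoothPeriodic.differentiable Φ)
    (smoothPeriodic.differentiable J) (fun z => congrFun (congrArg Subtype.val law) z)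
    (fun t => by simpa using J.2.2 (0, t)) t₁ t₂

end PlaneFunctions

theorem stmt_16
    (L : ℝ) (hL : 0 < L)
    (u1 u2 v1 v2 : ℝ × ℝ → ℝ)
    (hu1 : ContDiff ℝ (⊤ : ℕ∞) u1) (hu2 : ContDiff ℝ (⊤ : ℕ∞) u2)
    (hv1 : ContDiff ℝ (⊤ : ℕ∞) v1) (hv2 : ContDiff ℝ (⊤ : ℕ∞) v2)
    (hperu1 : ∀ x t : ℝ, u1 (x + L, t) = u1 (x, t))
    (hperu2 : ∀ x t : ℝ, u2 (x + L, t) = u2 (x, t))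
    (hperv1 : ∀ x t : ℝ, v1 (x + L, t) = v1 (x, t))
    (hperv2 : ∀ x t : ℝ, v2 (x + L, t) = v2 (x, t))
    (m1 m2 n1 n2 f1 f2 g1 g2 : ℝ × ℝ → ℝ)
    (hm1 : m1 = fun p => u1 p - pX (pX u1) p)
    (hm2 : m2 = fun p => u2 p - pX (pX u2) p)
    (hn1 : n1 = fun p => v1 p - pX (pX v1) p)
    (hn2 : n2 = fun p => v2 p - pX (pX v2) p)
    (hf1 : f1 = fun p => u2 p - pX v1 p)
    (hf2 : f2 = fun p => u1 p + pX v2 p)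
    (hg1 : g1 = fun p => v2 p + pX u1 p)
    (hg2 : g2 = fun p => v1 p - pX u2 p)
    (hsys : ∀ p : ℝ × ℝ,
        pT m1 p + n2 p * g1 p * g2 p + m1 p * (f2 p * g2 p + 2 * f1 p * g1 p) = 0 ∧
        pT m2 p - n1 p * g1 p * g2 p - m2 p * (f1 p * g1 p + 2 * f2 p * g2 p) = 0 ∧
        pT n1 p - m2 p * f1 p * f2 p - n1 p * (f2 p * g2 p + 2 * f1 p * g1 p) = 0 ∧
        pT n2 p + m1 p * f1 p * f2 p + n2 p * (f1 p * g1 p + 2 * f2 p * g2 p) = 0) :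
    ∀ t1 t2 : ℝ,
      (∫ x in (0:ℝ)..L,
          (f1 (x, t1) * g1 (x, t1) + f2 (x, t1) * g2 (x, t1))
            * (m2 (x, t1) * f2 (x, t1) + n1 (x, t1) * g1 (x, t1)))
        = ∫ x in (0:ℝ)..L,
            (f1 (x, t2) * g1 (x, t2) + f2 (x, t2) * g2 (x, t2))
              * (m2 (x, t2) * f2 (x, t2) + n1 (x, t2) * g1 (x, t2)) := by
  obtain ⟨u1, rfl⟩ := exists_smoothPeriodic_coe_eq hu1 hperu1
  obtain ⟨u2, rfl⟩ := exists_smoothPeriodic_coe_eq hu2 hperu2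
  obtain ⟨v1, rfl⟩ := exists_smoothPeriodic_coe_eq hv1 hperv1
  obtain ⟨v2, rfl⟩ := exists_smoothPeriodic_coe_eq hv2 hperv2
  set Dx := dirDeriv (L, (0 : ℝ)) (1, 0)
  set Dt := dirDeriv (L, (0 : ℝ)) (0, 1)
  simp only [pX_coe] at hm1 hm2 hn1 hn2 hf1 hf2 hg1 hg2
  obtain rfl : m1 = (u1 - Dx (Dx u1)).1 := hm1
  obtain rfl : m2 = (u2 - Dx (Dx u2)).1 := hm2
  obtain rfl : n1 = (v1 - Dx (Dx v1)).1 := hn1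
  obtain rfl : n2 = (v2 - Dx (Dx v2)).1 := hn2
  obtain rfl : f1 = (u2 - Dx v1).1 := hf1
  obtain rfl : f2 = (u1 + Dx v2).1 := hf2
  obtain rfl : g1 = (v2 + Dx u1).1 := hg1
  obtain rfl : g2 = (v1 - Dx u2).1 := hg2
  simp only [pT_coe, forall_and] at hsys
  obtain ⟨dt_m1, dt_m2, dt_n1, dt_n2⟩ := hsys
  have flow := IsAdjointPairFlow.of_fourComponentSystem (Dx := Dx) (Dt := Dt)
    rfl rfl rfl rfl rfl rfl rfl rfl (Subtype.ext (funext dt_m1)) (Subtype.ext (funext dt_m2))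
    (Subtype.ext (funext dt_n1)) (Subtype.ext (funext dt_n2))
  exact smoothPeriodic.integral_eq_of_dirDeriv_eq
    (flow.conservation_law_fin_two (dirDeriv_commute _ _ _))
end
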